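/- arXiv:1805.05739 — 3 statements merged into one kernel-verified Lean document; each statement's English description precedes it below -/
import Mathlib

section
/- Let ε > 0, g: ℝ^n → ℝ^n be real analytic in a neighborhood of 0, and let f ∈ C^∞((−ε,ε), ℝ^n) solve the ODE f'(x) = g(f(x)) for x ∈ (−ε,ε) with f(0) = 0. Then f is real analytic in a neighborhood of 0. -/
open scoped Topology

open Filter Set
open scoped ContDiff ENNReal unitInterval

/-! Write `u_c` for the curve `s ↦ f (x₀ + c s)` on `[0, 1]`. Integrating the differential equation
gives `u_c = f x₀ + c • V (g ∘ u_c)` in the Banach space `C([0, 1], E)`, where `V` is integration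
from `0`. The operator `u ↦ g ∘ u` is analytic near a constant curve, since the power series of `g`
can be evaluated pointwise. Hence the analytic implicit function theorem, applied at `c = 0` where
the equation degenerates to `u = f x₀`, shows that `c ↦ u_c` is analytic, and so is its value
`c ↦ f (x₀ + c)` at time `1`. -/

section Superposition

variable {K : Type*} [TopologicalSpace K]

section Topological

variable {E F : Type*} [TopologicalSpace E] [TopologicalSpace F] [Zero F] {f : E → F}

open Classical in
/-- The superposition (Nemytskii) operator `u ↦ f ∘ u` between spaces of continuous maps, with the
junk value `0` at those `u` for which `f ∘ u` is not continuous. -/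
noncomputable def superposition (f : E → F) (u : C(K, E)) : C(K, F) :=
  if h : Continuous (f ∘ u) then ⟨f ∘ u, h⟩ else 0

theorem superposition_apply {u : C(K, E)} (h : Continuous (f ∘ u)) (t : K) :
    superposition f u t = f (u t) := by
  simp [superposition, h]

theorem superposition_apply_of_forall_continuousAt {u : C(K, E)}
    (h : ∀ t, ContinuousAt f (u t)) (t : K) : superposition f u t = f (u t) :=
  superposition_apply
    (continuous_iff_continuousAt.2 fun s => (h s).comp u.continuous.continuousAt) t

theorem superposition_const (f : E → F) (a : E) :
    superposition f (.const K a) = .const K (f a) := by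
  ext t
  exact superposition_apply (continuous_const (y := f a)) t

theorem eventually_forall_apply_nhds_const [CompactSpace K] {a : E} {p : E → Prop}
    (hp : ∀ᶠ y in 𝓝 a, p y) : ∀ᶠ u in 𝓝 (ContinuousMap.const K a), ∀ t, p (u t) := by
  obtain ⟨U, hU, hUo, ha⟩ := eventually_nhds_iff.1 hp
  have hmaps : MapsTo (ContinuousMap.const K a) univ U := fun _ _ => ha
  filter_upwards [ContinuousMap.eventually_mapsTo isCompact_univ hUo hmaps] with u hu t
  exact hU _ (hu (mem_univ t))

end Topological

theorem continuousAt_superposition_const [CompactSpace K] {E F : Type*} [TopologicalSpace E]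
    [NormedAddCommGroup F] {f : E → F} {a : E} (hf : ∀ᶠ y in 𝓝 a, ContinuousAt f y) :
    ContinuousAt (superposition f) (ContinuousMap.const K a) := by
  refine Metric.tendsto_nhds.2 fun ε hε => ?_
  have hclose : ∀ᶠ y in 𝓝 a, dist (f y) (f a) < ε :=
    hf.self_of_nhds.eventually (Metric.ball_mem_nhds _ hε)
  filter_upwards [eventually_forall_apply_nhds_const hf,
    eventually_forall_apply_nhds_const hclose] with u hcont hu
  rw [superposition_const, ContinuousMap.dist_lt_iff hε]
  intro t
  rw [superposition_apply_of_forall_continuousAt hcont]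
  exact hu t

variable [CompactSpace K] {𝕜 : Type*} [NontriviallyNormedField 𝕜]

section Multilinear

variable {ι : Type*} [Fintype ι] {E : ι → Type*} [∀ i, NormedAddCommGroup (E i)]
  [∀ i, NormedSpace 𝕜 (E i)] {F : Type*} [NormedAddCommGroup F] [NormedSpace 𝕜 F]

variable (K) in
/-- The continuous multilinear map between spaces of continuous maps which applies the continuous
multilinear map `m` pointwise. -/
noncomputable def pointwiseMultilinear (m : ContinuousMultilinearMap 𝕜 E F) :
    ContinuousMultilinearMap 𝕜 (fun i => C(K, E i)) C(K, F) :=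
  MultilinearMap.mkContinuous
    { toFun := fun u => ⟨fun t => m fun i => u i t, by fun_prop⟩
      map_update_add' := fun u i x y => by
        ext t
        simp [Function.apply_update (fun j (v : C(K, E j)) => v t)]
      map_update_smul' := fun u i c x => by
        ext t
        simp [Function.apply_update (fun j (v : C(K, E j)) => v t)] }
    ‖m‖ fun u => (ContinuousMap.norm_le _ (by positivity)).2 fun t => by
      refine (m.le_opNorm _).trans ?_
      gcongr with i
      exact (u i).norm_coe_le_norm t

theorem pointwiseMultilinear_apply (m : ContinuousMultilinearMap 𝕜 E F) (u : ∀ i, C(K, E i))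
    (t : K) : pointwiseMultilinear K m u t = m fun i => u i t :=
  rfl

theorem norm_pointwiseMultilinear_le (m : ContinuousMultilinearMap 𝕜 E F) :
    ‖pointwiseMultilinear K m‖ ≤ ‖m‖ :=
  MultilinearMap.mkContinuous_norm_le _ (norm_nonneg _) _

end Multilinear

variable {E F : Type*} [NormedAddCommGroup E] [NormedSpace 𝕜 E] [NormedAddCommGroup F]
  [NormedSpace 𝕜 F] {g : E → F} {a : E}

theorem hasFPowerSeriesOnBall_superposition [CompleteSpace F]
    {p : FormalMultilinearSeries 𝕜 E F} {r : ℝ≥0∞} (hg : HasFPowerSeriesOnBall g p a r) :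
    HasFPowerSeriesOnBall (superposition g) (fun n => pointwiseMultilinear K (p n))
      (.const K a) r := by
  set P : FormalMultilinearSeries 𝕜 C(K, E) C(K, F) := fun n => pointwiseMultilinear K (p n)
  have hr : r ≤ P.radius := hg.r_le.trans
    (FormalMultilinearSeries.radius_le_of_le fun n => norm_pointwiseMultilinear_le (p n))
  refine ⟨hr, hg.r_pos, fun {u} hu => ?_⟩
  have hut (t : K) : u t ∈ Metric.eball (0 : E) r := by
    rw [mem_eball_zero_iff] at hu ⊢
    exact (enorm_le_iff_norm_le.2 (u.norm_coe_le_norm t)).trans_lt hu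
  have hmem (t : K) : a + u t ∈ Metric.eball a r := by
    simpa [edist_eq_enorm_sub] using hut t
  have hcont (t : K) : ContinuousAt g ((ContinuousMap.const K a + u) t) :=
    hg.continuousOn.continuousAt (Metric.isOpen_eball.mem_nhds (hmem t))
  have hsum : Summable fun n => P n fun _ => u := P.summable (Metric.eball_subset_eball hr hu)
  have hval : superposition g (.const K a + u) = ∑' n, P n fun _ => u := by
    ext t
    have heval : HasSum (fun n => p n fun _ => u t) ((∑' n, P n fun _ => u) t) := by
      simpa only [ContinuousMap.evalCLM_apply, P, pointwiseMultilinear_apply] using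
        hsum.hasSum.mapL (ContinuousMap.evalCLM 𝕜 t)
    rw [superposition_apply_of_forall_continuousAt hcont]
    exact (hg.hasSum (hut t)).unique heval
  exact hval ▸ hsum.hasSum

theorem analyticAt_superposition [CompleteSpace F] (hg : AnalyticAt 𝕜 g a) :
    AnalyticAt 𝕜 (superposition g) (ContinuousMap.const K a) :=
  let ⟨_, _, hp⟩ := hg
  (hasFPowerSeriesOnBall_superposition hp).analyticAt

end Superposition

section ImplicitFunction

variable {𝕜 : Type*} [RCLike 𝕜] {X Y Z : Type*}
  [NormedAddCommGroup X] [NormedSpace 𝕜 X] [CompleteSpace X]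
  [NormedAddCommGroup Y] [NormedSpace 𝕜 Y] [CompleteSpace Y]
  [NormedAddCommGroup Z] [NormedSpace 𝕜 Z] [CompleteSpace Z]

theorem analyticAt_of_eventually_apply_eq {Φ : X × Y → Z} {u : X → Y} {x₀ : X}
    (hΦ : AnalyticAt 𝕜 Φ (x₀, u x₀))
    (hinv : (fderiv 𝕜 Φ (x₀, u x₀) ∘L .inr 𝕜 X Y).IsInvertible) (hu : ContinuousAt u x₀)
    (h : ∀ᶠ x in 𝓝 x₀, Φ (x, u x) = Φ (x₀, u x₀)) : AnalyticAt 𝕜 u x₀ := by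
  have hω : ContDiffAt 𝕜 ω Φ (x₀, u x₀) := hΦ.contDiffAt
  have hgraph : Tendsto (fun x => (x, u x)) (𝓝 x₀) (𝓝 (x₀, u x₀)) := continuousAt_id.prodMk hu
  refine (hω.contDiffAt_implicitFunction (by simp) hinv).analyticAt.congr ?_
  filter_upwards [h, hgraph.eventually
    (hω.eventually_apply_eq_iff_implicitFunction (by simp) hinv)] with x hx hiff
  exact hiff.1 hx

theorem analyticAt_of_eventually_eq_add_smul {N : X → X} {a : X} (hN : AnalyticAt 𝕜 N a)
    {u : 𝕜 → X} (hu : ContinuousAt u 0) (h : ∀ᶠ c in 𝓝 0, u c = a + c • N (u c)) :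
    AnalyticAt 𝕜 u 0 := by
  have hu0 : u 0 = a := by simpa using h.self_of_nhds
  let Φ : 𝕜 × X → X := fun q => q.2 - q.1 • N q.2
  have hΦ : AnalyticAt 𝕜 Φ (0, u 0) := by
    have hN' : AnalyticAt 𝕜 (fun q : 𝕜 × X => N q.2) (0, u 0) :=
      AnalyticAt.comp (g := N) (f := Prod.snd) (hu0 ▸ hN) analyticAt_snd
    exact analyticAt_snd.sub (analyticAt_fst.smul hN')
  have hpartial : fderiv 𝕜 Φ (0, u 0) ∘L .inr 𝕜 𝕜 X = .id 𝕜 X := by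
    have hcomp := hΦ.differentiableAt.hasFDerivAt.comp (u 0) (hasFDerivAt_prodMk_right 0 (u 0))
    have hid : Φ ∘ (fun y => (0, y)) = id := by
      ext y
      simp [Φ]
    exact hcomp.unique (hid ▸ hasFDerivAt_id (u 0))
  refine analyticAt_of_eventually_apply_eq hΦ ?_ hu ?_
  · rw [hpartial]
    exact ⟨.refl 𝕜 X, rfl⟩
  · filter_upwards [h] with c hc
    simp only [Φ, zero_smul, sub_zero, hu0]
    exact sub_eq_of_eq_add hc

end ImplicitFunction

section Volterra

variable {E : Type*} [NormedAddCommGroup E] [NormedSpace ℝ E]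

/-- The Volterra operator `w ↦ (t ↦ ∫ s in 0..t, w s)` on continuous maps on `[0, 1]`. -/
noncomputable def volterra : C(I, E) →L[ℝ] C(I, E) :=
  LinearMap.mkContinuous
    { toFun := fun w =>
        ⟨fun t => ∫ s in (0 : ℝ)..t, w.IccExtend zero_le_one s,
          (intervalIntegral.continuous_primitive
            (fun _ _ => (w.IccExtend zero_le_one).continuous.intervalIntegrable _ _) 0).comp
            continuous_subtype_val⟩
      map_add' := fun v w => ContinuousMap.ext fun _ => intervalIntegral.integral_add
        ((v.IccExtend zero_le_one).continuous.intervalIntegrable _ _)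
        ((w.IccExtend zero_le_one).continuous.intervalIntegrable _ _)
      map_smul' := fun c _ => ContinuousMap.ext fun _ => intervalIntegral.integral_smul c _ }
    1 fun w => (ContinuousMap.norm_le _ (by positivity)).2 fun t => by
      refine (intervalIntegral.norm_integral_le_of_norm_le_const
        fun s _ => w.norm_coe_le_norm _).trans ?_
      rw [sub_zero, abs_of_nonneg t.2.1, mul_comm]
      gcongr
      exact t.2.2

theorem volterra_apply (w : C(I, E)) (t : I) :
    volterra w t = ∫ s in (0 : ℝ)..t, w.IccExtend zero_le_one s :=
  rfl

theorem volterra_apply_of_hasDerivAt [CompleteSpace E] {φ : ℝ → E} {w : C(I, E)}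
    (h : ∀ s : I, HasDerivAt φ (w s) s) (t : I) : volterra w t = φ t - φ 0 := by
  rw [volterra_apply]
  refine intervalIntegral.integral_eq_sub_of_hasDerivAt (fun s hs => ?_)
    ((w.IccExtend zero_le_one).continuous.intervalIntegrable _ _)
  rw [uIcc_of_le t.2.1] at hs
  have hsI : s ∈ I := ⟨hs.1, hs.2.trans t.2.2⟩
  simpa only [ContinuousMap.coe_IccExtend, IccExtend_of_mem _ _ hsI] using h ⟨s, hsI⟩

end Volterra

section IntegralCurve

/-- The path `s ↦ x₀ + c s` from `x₀` to `x₀ + c`, used to rescale a curve defined near `x₀` to the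
fixed interval `[0, 1]`. -/
def affinePath (x₀ c : ℝ) : C(I, ℝ) :=
  ⟨fun s => x₀ + c * s, by fun_prop⟩

theorem affinePath_apply (x₀ c : ℝ) (s : I) : affinePath x₀ c s = x₀ + c * s :=
  rfl

theorem affinePath_zero (x₀ : ℝ) : affinePath x₀ 0 = .const I x₀ := by
  ext s
  simp [affinePath_apply]

theorem continuous_affinePath (x₀ : ℝ) : Continuous (affinePath x₀) :=
  ContinuousMap.continuous_of_continuous_uncurry _
    (show Continuous fun q : ℝ × I => x₀ + q.1 * q.2 by fun_prop)

theorem eventually_forall_affinePath {x₀ : ℝ} {p : ℝ → Prop} (hp : ∀ᶠ x in 𝓝 x₀, p x) :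
    ∀ᶠ c in 𝓝 0, ∀ s, p (affinePath x₀ c s) :=
  (continuous_affinePath x₀).continuousAt.eventually
    (affinePath_zero x₀ ▸ eventually_forall_apply_nhds_const hp)

variable {E : Type*} [NormedAddCommGroup E] [NormedSpace ℝ E] [CompleteSpace E]
  {g : E → E} {f : ℝ → E} {x₀ : ℝ}

theorem superposition_affinePath_eq {c : ℝ}
    (hf : ∀ s, HasDerivAt f (g (f (affinePath x₀ c s))) (affinePath x₀ c s))
    (hg : ∀ s, ContinuousAt g (f (affinePath x₀ c s))) :
    superposition f (affinePath x₀ c) =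
      .const I (f x₀) + c • volterra (superposition g (superposition f (affinePath x₀ c))) := by
  have hfu := superposition_apply_of_forall_continuousAt fun s => (hf s).continuousAt
  have hgu (s : I) : superposition g (superposition f (affinePath x₀ c)) s =
      g (f (affinePath x₀ c s)) := by
    rw [superposition_apply_of_forall_continuousAt (fun s => (hfu s).symm ▸ hg s), hfu]
  have hderiv (s : I) : HasDerivAt (fun s => f (x₀ + c * s))
      ((c • superposition g (superposition f (affinePath x₀ c))) s) s := by
    rw [ContinuousMap.smul_apply, hgu]
    have haffine : HasDerivAt (fun s => x₀ + c * s) c (s : ℝ) := by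
      simpa using ((hasDerivAt_id (s : ℝ)).const_mul c).const_add x₀
    exact (hf s).scomp (s : ℝ) haffine
  ext t
  rw [← map_smul, ContinuousMap.add_apply, volterra_apply_of_hasDerivAt hderiv, hfu,
    affinePath_apply]
  simp

theorem analyticAt_superposition_affinePath (hg : AnalyticAt ℝ g (f x₀))
    (hf : IsIntegralCurveAt f (fun _ => g) x₀) :
    AnalyticAt ℝ (fun c => superposition f (affinePath x₀ c)) 0 := by
  have hfc : ∀ᶠ x in 𝓝 x₀, ContinuousAt f x := hf.mono fun _ hx => hx.continuousAt
  have hgc : ∀ᶠ x in 𝓝 x₀, ContinuousAt g (f x) :=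
    hf.continuousAt.eventually (hg.eventually_analyticAt.mono fun _ hy => hy.continuousAt)
  have hN : AnalyticAt ℝ (fun u : C(I, E) => volterra (superposition g u)) (.const I (f x₀)) :=
    (volterra.analyticAt _).comp (analyticAt_superposition hg)
  have hcont : ContinuousAt (fun c => superposition f (affinePath x₀ c)) 0 :=
    (continuousAt_superposition_const hfc).comp_of_eq
      (continuous_affinePath x₀).continuousAt (affinePath_zero x₀)
  refine analyticAt_of_eventually_eq_add_smul hN hcont ?_
  filter_upwards [eventually_forall_affinePath hf, eventually_forall_affinePath hgc] with c hfd hgd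
  exact superposition_affinePath_eq hfd hgd

theorem stmt5_general (hg : AnalyticAt ℝ g (f x₀)) (hf : IsIntegralCurveAt f (fun _ => g) x₀) :
    AnalyticAt ℝ f x₀ := by
  have hendpoint : AnalyticAt ℝ (fun c => f (x₀ + c)) 0 := by
    refine (((ContinuousMap.evalCLM ℝ (1 : I)).analyticAt _).comp
      (analyticAt_superposition_affinePath hg hf)).congr ?_
    filter_upwards [eventually_forall_affinePath hf] with c hc
    simpa [affinePath_apply] using
      superposition_apply_of_forall_continuousAt (fun s => (hc s).continuousAt) 1
  have hsub : AnalyticAt ℝ (fun x => x - x₀) x₀ := analyticAt_id.sub analyticAt_const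
  simpa [Function.comp_def] using hendpoint.comp_of_eq hsub (sub_self x₀)

end IntegralCurve

/-- Cauchy–Kovalevskaya, ODE case: a smooth solution on `(-ε, ε)` of `f' = g(f)`, `f(0)=0`,
with `g` real analytic near `0`, is real analytic near `0`. -/
theorem stmt5 {n : ℕ} (ε : ℝ) (hε : 0 < ε)
    (g : EuclideanSpace ℝ (Fin n) → EuclideanSpace ℝ (Fin n))
    (U : Set (EuclideanSpace ℝ (Fin n))) (hU : U ∈ 𝓝 (0 : EuclideanSpace ℝ (Fin n)))
    (hg : AnalyticOnNhd ℝ g U)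
    (f : ℝ → EuclideanSpace ℝ (Fin n))
    (hf : ContDiffOn ℝ (⊤ : ℕ∞) f (Set.Ioo (-ε) ε))
    (hode : ∀ x ∈ Set.Ioo (-ε) ε, HasDerivAt f (g (f x)) x)
    (hf0 : f 0 = 0) :
    AnalyticAt ℝ f 0 :=
  stmt5_general (hf0 ▸ hg 0 (mem_of_mem_nhds hU))
    (mem_of_superset (Ioo_mem_nhds (neg_lt_zero.2 hε) hε) hode)
end

section
/- Let m > 1/2 and 0 < ε ≤ 1/2. There exists a constant C_H < ∞ independent of ε, s₁, s₂ such that for all s₁, s₂ ∈ [0,1] and all smooth f, g: ℝ/ℤ → ℝ, ‖H^ε_{s₁,s₂}(f,g)‖_{H^m} ≤ C_H ‖f‖_{H^m} ‖g‖_{H^m}, where H^ε_{s₁,s₂}(f,g)(x) = ∫_{ε ≤ |w| ≤ 1/2} f(x+s₁w) g(x+s₂w)/w dw. -/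
open scoped Real

/-- The `k`-th Fourier coefficient of a (1-periodic) function `h : ℝ → ℝ`. -/
noncomputable def fourierCoeffR (h : ℝ → ℝ) (k : ℤ) : ℂ :=
  ∫ x in (0:ℝ)..1, (h x : ℂ) * Complex.exp (-2 * π * Complex.I * k * x)

/-- The `Hᵐ(ℝ/ℤ)` norm via Fourier coefficients. -/
noncomputable def sobNorm (m : ℝ) (h : ℝ → ℝ) : ℝ :=
  Real.sqrt (∑' k : ℤ, (1 + (k:ℝ)^2) ^ m * ‖fourierCoeffR h k‖^2)

/-!
Expanding `f` and `g` in Fourier series, `H^ε_{s₁,s₂}` multiplies the pair of modes `(j, l)` by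
`∫_{ε ≤ |w| ≤ 1/2} e^{2πi(j s₁ + l s₂)w} dw / w`, a difference of two values of the sine integral,
hence bounded uniformly in all parameters. The Fourier coefficients of `H^ε_{s₁,s₂}(f, g)` are thus
dominated by a constant times the convolution of `|f̂|` and `|ĝ|`, and for `m > 1/2` the weighted
space `ℓ²((1 + k²)^m)` is a convolution algebra: the weight is quasi-subadditive and its inverse is
summable, so Cauchy–Schwarz applies.
-/

open Real MeasureTheory
open scoped ENNReal FourierTransform

section SineIntegral

/-- The sine integral `Si x = ∫₀ˣ sin t / t dt`, with the integrand extended continuously to `0`. -/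
noncomputable def sinIntegral (x : ℝ) : ℝ :=
  ∫ t in (0 : ℝ)..x, sinc t

lemma sinIntegral_neg (x : ℝ) : sinIntegral (-x) = -sinIntegral x := by
  have h := intervalIntegral.integral_comp_neg (a := 0) (b := x) sinc
  simp only [sinc_neg, neg_zero] at h
  rw [sinIntegral, sinIntegral, h, intervalIntegral.integral_symm]

lemma integral_sinc_eq_sub (a b : ℝ) :
    ∫ t in a..b, sinc t = sinIntegral b - sinIntegral a :=
  (intervalIntegral.integral_interval_sub_left (continuous_sinc.intervalIntegrable _ _)
    (continuous_sinc.intervalIntegrable _ _)).symm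

lemma abs_sinIntegral_le_abs (x : ℝ) : |sinIntegral x| ≤ |x| := by
  simpa [sinIntegral] using intervalIntegral.norm_integral_le_of_norm_le_const (a := 0) (b := x)
    (C := 1) (f := sinc) fun t _ => abs_sinc_le_one t

lemma integral_sinc_le {a b : ℝ} (ha : 0 < a) (hab : a ≤ b) : ∫ t in a..b, sinc t ≤ 2 / a := by
  have hderiv : ∀ t ∈ Set.Icc a b,
      HasDerivAt (fun t => -((1 + cos t) / t)) (sinc t + (1 + cos t) / t ^ 2) t := fun t ht => by
    have ht0 : t ≠ 0 := (ha.trans_le ht.1).ne'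
    refine (((hasDerivAt_cos t).const_add 1).div (hasDerivAt_id t) ht0).neg.congr_deriv ?_
    rw [sinc_of_ne_zero ht0]
    simp only [id]
    field_simp
    ring
  have hle : ∫ t in a..b, sinc t ≤ -((1 + cos b) / b) - -((1 + cos a) / a) :=
    intervalIntegral.integral_le_sub_of_hasDeriv_right_of_le hab
      (fun t ht => (hderiv t ht).continuousAt.continuousWithinAt)
      (fun t ht => (hderiv t (Set.Ioo_subset_Icc_self ht)).hasDerivWithinAt)
      continuous_sinc.continuousOn.integrableOn_Icc
      (fun t _ =>
        le_add_of_nonneg_right (div_nonneg (by linarith [neg_one_le_cos t]) (sq_nonneg t)))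
  have hb : 0 ≤ (1 + cos b) / b :=
    div_nonneg (by linarith [neg_one_le_cos b]) (ha.le.trans hab)
  have ha' : (1 + cos a) / a ≤ 2 / a := by gcongr; linarith [cos_le_one a]
  linarith

lemma le_integral_sinc {a b : ℝ} (ha : 0 < a) (hab : a ≤ b) : -(2 / a) ≤ ∫ t in a..b, sinc t := by
  have hderiv : ∀ t ∈ Set.Icc a b,
      HasDerivAt (fun t => (1 - cos t) / t) (sinc t - (1 - cos t) / t ^ 2) t := fun t ht => by
    have ht0 : t ≠ 0 := (ha.trans_le ht.1).ne'
    refine (((hasDerivAt_cos t).const_sub 1).div (hasDerivAt_id t) ht0).congr_deriv ?_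
    rw [sinc_of_ne_zero ht0]
    simp only [id]
    field_simp
  have hle : (1 - cos b) / b - (1 - cos a) / a ≤ ∫ t in a..b, sinc t :=
    intervalIntegral.sub_le_integral_of_hasDeriv_right_of_le hab
      (fun t ht => (hderiv t ht).continuousAt.continuousWithinAt)
      (fun t ht => (hderiv t (Set.Ioo_subset_Icc_self ht)).hasDerivWithinAt)
      continuous_sinc.continuousOn.integrableOn_Icc
      (fun t _ => sub_le_self _ (div_nonneg (by linarith [cos_le_one t]) (sq_nonneg t)))
  have hb : 0 ≤ (1 - cos b) / b :=
    div_nonneg (by linarith [cos_le_one b]) (ha.le.trans hab)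
  have ha' : (1 - cos a) / a ≤ 2 / a := by gcongr; linarith [neg_one_le_cos a]
  linarith

lemma abs_sinIntegral_le (x : ℝ) : |sinIntegral x| ≤ 3 := by
  wlog hx : 0 ≤ x generalizing x
  · simpa [sinIntegral_neg] using this (-x) (by linarith)
  rcases le_total x 1 with hx1 | hx1
  · linarith [abs_sinIntegral_le_abs x, abs_of_nonneg hx]
  · have hone : |sinIntegral 1| ≤ 1 := by simpa using abs_sinIntegral_le_abs 1
    have hlower := le_integral_sinc one_pos hx1
    have hupper := integral_sinc_le one_pos hx1
    rw [integral_sinc_eq_sub] at hlower hupper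
    rw [abs_le] at hone ⊢
    constructor <;> linarith

lemma integral_sin_mul_div (c a b : ℝ) :
    ∫ w in a..b, sin (c * w) / w = sinIntegral (c * b) - sinIntegral (c * a) := by
  rw [← integral_sinc_eq_sub, ← intervalIntegral.mul_integral_comp_mul_left,
    ← intervalIntegral.integral_const_mul]
  refine intervalIntegral.integral_congr_ae ?_
  filter_upwards [volume.ae_ne 0] with w hw _
  rcases eq_or_ne c 0 with rfl | hc
  · simp
  · rw [sinc_of_ne_zero (mul_ne_zero hc hw)]
    field_simp

end SineIntegral

section TruncatedHilbertSymbol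

/-- The Fourier transform `∫_{ε ≤ |w| ≤ R} e^{2πicw} dw / w` of the doubly truncated Hilbert
kernel. -/
noncomputable def truncHilbertSymbol (ε R c : ℝ) : ℂ :=
  (∫ w in ε..R, (𝐞 (c * w) : ℂ) * (w : ℂ)⁻¹) + ∫ w in -R..-ε, (𝐞 (c * w) : ℂ) * (w : ℂ)⁻¹

variable {ε R : ℝ}

lemma fourierChar_sub_fourierChar_neg (t : ℝ) :
    (𝐞 t : ℂ) - 𝐞 (-t) = 2 * Complex.I * sin (2 * π * t) := by
  rw [fourierChar_apply, fourierChar_apply, Complex.ofReal_sin, mul_right_comm (2 : ℂ),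
    Complex.two_sin, mul_assoc _ Complex.I, Complex.I_mul_I, mul_neg_one, neg_sub, mul_neg,
    Complex.ofReal_neg]

lemma intervalIntegrable_ofReal_inv {a b : ℝ} (h : (0 : ℝ) ∉ Set.uIcc a b) :
    IntervalIntegrable (fun w : ℝ => (w : ℂ)⁻¹) volume a b := by
  refine (Complex.continuous_ofReal.continuousOn.inv₀ fun w hw => ?_).intervalIntegrable
  exact Complex.ofReal_ne_zero.2 (ne_of_mem_of_not_mem hw h)

lemma zero_notMem_uIcc (hε : 0 < ε) (hεR : ε ≤ R) : (0 : ℝ) ∉ Set.uIcc ε R :=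
  Set.notMem_uIcc_of_lt hε (hε.trans_le hεR)

lemma zero_notMem_uIcc_neg (hε : 0 < ε) (hεR : ε ≤ R) : (0 : ℝ) ∉ Set.uIcc (-R) (-ε) :=
  Set.notMem_uIcc_of_gt (by linarith) (by linarith)

lemma truncHilbertSymbol_eq (hε : 0 < ε) (hεR : ε ≤ R) (c : ℝ) :
    truncHilbertSymbol ε R c =
      2 * Complex.I * (sinIntegral (2 * π * c * R) - sinIntegral (2 * π * c * ε) : ℝ) := by
  have hint : ∀ c : ℝ,
      IntervalIntegrable (fun w : ℝ => (𝐞 (c * w) : ℂ) * (w : ℂ)⁻¹) volume ε R :=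
    fun c =>
      (intervalIntegrable_ofReal_inv (zero_notMem_uIcc hε hεR)).continuousOn_mul (by fun_prop)
  have hneg : ∫ w in -R..-ε, (𝐞 (c * w) : ℂ) * (w : ℂ)⁻¹ =
      -∫ w in ε..R, (𝐞 (-c * w) : ℂ) * (w : ℂ)⁻¹ := by
    rw [← intervalIntegral.integral_comp_neg, ← intervalIntegral.integral_neg]
    simp
  rw [truncHilbertSymbol, hneg, ← sub_eq_add_neg, ← intervalIntegral.integral_sub (hint _) (hint _),
    ← integral_sin_mul_div, ← intervalIntegral.integral_ofReal,
    ← intervalIntegral.integral_const_mul]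
  congr! 2
  rw [← sub_mul, neg_mul, fourierChar_sub_fourierChar_neg]
  push_cast
  ring_nf

lemma norm_truncHilbertSymbol_le (hε : 0 < ε) (hεR : ε ≤ R) (c : ℝ) :
    ‖truncHilbertSymbol ε R c‖ ≤ 12 := by
  rw [truncHilbertSymbol_eq hε hεR, norm_mul, norm_mul, Complex.norm_I, Complex.norm_ofNat,
    Complex.norm_real, norm_eq_abs]
  have := abs_sub (sinIntegral (2 * π * c * R)) (sinIntegral (2 * π * c * ε))
  linarith [abs_sinIntegral_le (2 * π * c * R), abs_sinIntegral_le (2 * π * c * ε)]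

end TruncatedHilbertSymbol

section FourierCoefficients

lemma fourierCoeffR_eq_integral_fourierChar (h : ℝ → ℝ) (k : ℤ) :
    fourierCoeffR h k = ∫ x in (0 : ℝ)..1, 𝐞 (-(k * x)) * (h x : ℂ) := by
  have hchar : ∀ x : ℝ, Complex.exp (-2 * π * Complex.I * k * x) = 𝐞 (-(k * x)) := fun x => by
    rw [fourierChar_apply]
    push_cast
    ring_nf
  exact intervalIntegral.integral_congr fun x _ => by rw [hchar, mul_comm]

lemma fourier_coe_eq_fourierChar {T : ℝ} (k : ℤ) (x : ℝ) :
    fourier k (x : AddCircle T) = 𝐞 (k * x / T) := by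
  rw [fourier_coe_apply, fourierChar_apply]
  push_cast
  ring_nf

lemma fourierCoeffR_eq_fourierCoeffOn (h : ℝ → ℝ) (k : ℤ) :
    fourierCoeffR h k = fourierCoeffOn one_pos (fun x => (h x : ℂ)) k := by
  rw [fourierCoeffOn_eq_integral, fourierCoeffR_eq_integral_fourierChar]
  simp only [fourier_coe_eq_fourierChar, sub_zero, div_one, one_smul, smul_eq_mul, Int.cast_neg,
    neg_mul]

lemma summable_norm_sq_fourierCoeffR {f : ℝ → ℝ} (hf : Continuous f) :
    Summable fun k => ‖fourierCoeffR f k‖ ^ 2 := by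
  have hL2 : MemLp (fun x => (f x : ℂ)) 2 (volume.restrict (Set.Ioc 0 1)) :=
    (memLp_two_iff_integrable_sq_norm (by fun_prop)).2
      (Continuous.integrableOn_Ioc (by fun_prop))
  simpa only [fourierCoeffR_eq_fourierCoeffOn] using (hasSum_sq_fourierCoeffOn one_pos hL2).summable

lemma fourierCoeffR_deriv {f : ℝ → ℝ} (hp : Function.Periodic f 1) (hf : ContDiff ℝ 1 f) (k : ℤ) :
    fourierCoeffR (deriv f) k = 2 * π * Complex.I * k * fourierCoeffR f k := by
  have hderiv : ∀ x, HasDerivAt f (deriv f x) x := fun x =>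
    (hf.differentiable one_ne_zero x).hasDerivAt
  have hcont : Continuous (deriv f) := hf.continuous_deriv le_rfl
  have hends : f 1 = f 0 := by simpa using hp 0
  rcases eq_or_ne k 0 with rfl | hk
  · simp [fourierCoeffR, intervalIntegral.integral_ofReal,
      intervalIntegral.integral_deriv_eq_sub (fun x _ => (hderiv x).differentiableAt)
      (hcont.intervalIntegrable _ _), hends]
  · have key := fourierCoeffOn_of_hasDerivAt one_pos hk (fun x _ => (hderiv x).ofReal_comp)
      ((Complex.continuous_ofReal.comp hcont).intervalIntegrable _ _)
    rw [fourierCoeffR_eq_fourierCoeffOn, fourierCoeffR_eq_fourierCoeffOn, key]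
    have hπ : (π : ℂ) ≠ 0 := Complex.ofReal_ne_zero.2 pi_ne_zero
    have hk' : (k : ℂ) ≠ 0 := Int.cast_ne_zero.2 hk
    simp only [hends, sub_self, mul_zero, zero_sub, Complex.ofReal_one, Complex.ofReal_zero,
      sub_zero, one_mul]
    field_simp

lemma fourierCoeffR_iteratedDeriv (n : ℕ) {f : ℝ → ℝ} (hp : Function.Periodic f 1)
    (hf : ContDiff ℝ n f) (k : ℤ) :
    fourierCoeffR (iteratedDeriv n f) k = (2 * π * Complex.I * k) ^ n * fourierCoeffR f k := by
  induction n generalizing f with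
  | zero => simp
  | succ n ih =>
    have hf' : ContDiff ℝ (n + 1) f := by exact_mod_cast hf
    have hp' : Function.Periodic (deriv f) 1 := fun x => by
      rw [← deriv_comp_add_const, funext hp]
    rw [iteratedDeriv_succ', ih hp' hf'.deriv', fourierCoeffR_deriv hp (hf'.of_le (by simp)),
      pow_succ]
    ring

lemma hasSum_fourierCoeffR {f : ℝ → ℝ} (hp : Function.Periodic f 1) (hf : Continuous f)
    (hsum : Summable fun k => ‖fourierCoeffR f k‖) (x : ℝ) :
    HasSum (fun k : ℤ => fourierCoeffR f k * 𝐞 (k * x)) (f x) := by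
  have hpc : Function.Periodic (fun x => (f x : ℂ)) 1 := fun x => by simp [hp x]
  let F : C(AddCircle (1 : ℝ), ℂ) := ⟨hpc.lift, continuous_quot_lift _ (by fun_prop)⟩
  have hF : fourierCoeff F = fourierCoeffR f := funext fun k => by
    rw [fourierCoeff_eq_intervalIntegral _ _ 0, fourierCoeffR_eq_integral_fourierChar]
    simp only [fourier_coe_eq_fourierChar, div_one, one_smul, zero_add, smul_eq_mul, Int.cast_neg,
      neg_mul]
    rfl
  have h := has_pointwise_sum_fourier_series_of_summable (f := F) (hF ▸ hsum.of_norm) x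
  simp only [hF, fourier_coe_eq_fourierChar, div_one, smul_eq_mul] at h
  exact h

lemma integral_fourierChar_int_mul (n : ℤ) :
    ∫ x in (0 : ℝ)..1, (𝐞 (n * x) : ℂ) = if n = 0 then 1 else 0 := by
  split_ifs with hn
  · simp [hn]
  · have hc : 2 * π * n * Complex.I ≠ 0 := by simp [pi_ne_zero, hn]
    have hexp : Complex.exp (2 * π * n * Complex.I) = 1 :=
      Complex.exp_eq_one_iff.2 ⟨n, by ring⟩
    have hchar : ∀ x : ℝ, (𝐞 (n * x) : ℂ) = Complex.exp (2 * π * n * Complex.I * x) := fun x => by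
      rw [fourierChar_apply]
      push_cast
      ring_nf
    simp only [hchar]
    rw [integral_exp_mul_complex hc]
    simp [hexp]

lemma hasSum_fourierCoeffR_of_hasSum {ι : Type*} [Countable ι] {a : ι → ℂ} {n : ι → ℤ}
    {h : ℝ → ℝ} (ha : Summable fun i => ‖a i‖)
    (hh : ∀ x, HasSum (fun i => a i * 𝐞 (n i * x)) (h x)) (k : ℤ) :
    HasSum (fun i => if n i = k then a i else 0) (fourierCoeffR h k) := by
  have hshift : ∀ i (x : ℝ),
      𝐞 (-(k * x)) * (a i * 𝐞 (n i * x)) = a i * 𝐞 ((n i - k : ℤ) * x) := fun i x => by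
    rw [mul_left_comm, ← Circle.coe_mul, ← AddChar.map_add_eq_mul]
    push_cast
    ring_nf
  have key := intervalIntegral.hasSum_integral_of_dominated_convergence (a := 0) (b := 1)
    (μ := volume) (F := fun i (x : ℝ) => 𝐞 (-(k * x)) * (a i * 𝐞 (n i * x)))
    (fun i _ => ‖a i‖) (fun i => Continuous.aestronglyMeasurable (by fun_prop))
    (fun i => .of_forall fun x _ => by simp [Circle.norm_coe]) (.of_forall fun _ _ => ha)
    intervalIntegrable_const
    (.of_forall fun x _ => (hh x).mul_left _)
  rw [fourierCoeffR_eq_integral_fourierChar]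
  refine key.congr_fun fun i => ?_
  simp only [hshift, intervalIntegral.integral_const_mul, integral_fourierChar_int_mul, sub_eq_zero,
    mul_ite, mul_one, mul_zero]

end FourierCoefficients

section TrigonometricSeries

lemma hasSum_mul_of_summable_norm {R ι κ : Type*} [NormedRing R] [CompleteSpace R] {u : ι → R}
    {v : κ → R} {a b : R} (hu : Summable fun i => ‖u i‖) (hv : Summable fun j => ‖v j‖)
    (ha : HasSum u a) (hb : HasSum v b) : HasSum (fun p : ι × κ => u p.1 * v p.2) (a * b) :=
  ha.mul hb (summable_mul_of_summable_norm hu hv)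

variable {f g : ℝ → ℂ} {c d : ℤ → ℂ}

lemma hasSum_mul_fourierChar (hc : Summable fun k => ‖c k‖) (hd : Summable fun k => ‖d k‖)
    (hf : ∀ x, HasSum (fun k : ℤ => c k * 𝐞 (k * x)) (f x))
    (hg : ∀ x, HasSum (fun k : ℤ => d k * 𝐞 (k * x)) (g x)) (s₁ s₂ x w : ℝ) :
    HasSum (fun p : ℤ × ℤ => c p.1 * d p.2 * 𝐞 ((p.1 * s₁ + p.2 * s₂) * w) *
      𝐞 ((p.1 + p.2 : ℤ) * x)) (f (x + s₁ * w) * g (x + s₂ * w)) := by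
  have hc' : Summable fun k : ℤ => ‖c k * 𝐞 (k * (x + s₁ * w))‖ := by
    simpa only [norm_mul, Circle.norm_coe, mul_one] using hc
  have hd' : Summable fun k : ℤ => ‖d k * 𝐞 (k * (x + s₂ * w))‖ := by
    simpa only [norm_mul, Circle.norm_coe, mul_one] using hd
  have hmode : ∀ j l : ℤ, c j * d l * 𝐞 ((j * s₁ + l * s₂) * w) * 𝐞 ((j + l : ℤ) * x) =
      c j * 𝐞 (j * (x + s₁ * w)) * (d l * 𝐞 (l * (x + s₂ * w))) := fun j l => by
    rw [mul_mul_mul_comm, mul_assoc (c j * d l), ← Circle.coe_mul, ← Circle.coe_mul,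
      ← AddChar.map_add_eq_mul, ← AddChar.map_add_eq_mul]
    push_cast
    ring_nf
  simpa only [hmode] using
    hasSum_mul_of_summable_norm hc' hd' (hf (x + s₁ * w)) (hg (x + s₂ * w))

lemma hasSum_integral_mul_mul (hc : Summable fun k => ‖c k‖) (hd : Summable fun k => ‖d k‖)
    (hf : ∀ x, HasSum (fun k : ℤ => c k * 𝐞 (k * x)) (f x))
    (hg : ∀ x, HasSum (fun k : ℤ => d k * 𝐞 (k * x)) (g x)) {K : ℝ → ℂ} {a b : ℝ}
    (hK : IntervalIntegrable K volume a b) (s₁ s₂ x : ℝ) :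
    HasSum (fun p : ℤ × ℤ => c p.1 * d p.2 *
        (∫ w in a..b, 𝐞 ((p.1 * s₁ + p.2 * s₂) * w) * K w) * 𝐞 ((p.1 + p.2 : ℤ) * x))
      (∫ w in a..b, f (x + s₁ * w) * g (x + s₂ * w) * K w) := by
  have hcd : Summable fun p : ℤ × ℤ => ‖c p.1‖ * ‖d p.2‖ :=
    hc.mul_of_nonneg hd (fun _ => norm_nonneg _) fun _ => norm_nonneg _
  have key := intervalIntegral.hasSum_integral_of_dominated_convergence (a := a) (b := b)
    (μ := volume)
    (F := fun (p : ℤ × ℤ) (w : ℝ) => c p.1 * d p.2 * 𝐞 ((p.1 * s₁ + p.2 * s₂) * w) *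
      𝐞 ((p.1 + p.2 : ℤ) * x) * K w)
    (fun p w => ‖c p.1‖ * ‖d p.2‖ * ‖K w‖)
    (fun p => (Continuous.aestronglyMeasurable (by fun_prop)).mul
      (IntervalIntegrable.aestronglyMeasurable_restrict_uIoc hK))
    (fun p => .of_forall fun w _ => by simp [Circle.norm_coe])
    (.of_forall fun w _ => hcd.mul_right _)
    (by simpa only [tsum_mul_right] using hK.norm.const_mul _)
    (.of_forall fun w _ => (hasSum_mul_fourierChar hc hd hf hg s₁ s₂ x w).mul_right _)
  refine key.congr_fun fun p => ?_
  rw [← intervalIntegral.integral_const_mul, ← intervalIntegral.integral_mul_const]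
  congr! 2
  ring

end TrigonometricSeries

section BilinearHilbert

/-- The bilinear Hilbert transform with kernel `1 / w` truncated to `ε ≤ |w| ≤ R`. -/
noncomputable def truncBilinearHilbert (ε R s₁ s₂ : ℝ) (f g : ℝ → ℝ) (x : ℝ) : ℝ :=
  (∫ w in ε..R, f (x + s₁ * w) * g (x + s₂ * w) / w) +
    ∫ w in -R..-ε, f (x + s₁ * w) * g (x + s₂ * w) / w

variable {ε R : ℝ} {f g : ℝ → ℝ}

lemma hasSum_truncBilinearHilbert (hε : 0 < ε) (hεR : ε ≤ R) {c d : ℤ → ℂ}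
    (hc : Summable fun k => ‖c k‖) (hd : Summable fun k => ‖d k‖)
    (hf : ∀ x, HasSum (fun k : ℤ => c k * 𝐞 (k * x)) (f x))
    (hg : ∀ x, HasSum (fun k : ℤ => d k * 𝐞 (k * x)) (g x)) (s₁ s₂ x : ℝ) :
    HasSum (fun p : ℤ × ℤ => c p.1 * d p.2 * truncHilbertSymbol ε R (p.1 * s₁ + p.2 * s₂) *
      𝐞 ((p.1 + p.2 : ℤ) * x)) (truncBilinearHilbert ε R s₁ s₂ f g x) := by
  have hpos := hasSum_integral_mul_mul hc hd hf hg
    (intervalIntegrable_ofReal_inv (zero_notMem_uIcc hε hεR)) s₁ s₂ x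
  have hneg := hasSum_integral_mul_mul hc hd hf hg
    (intervalIntegrable_ofReal_inv (zero_notMem_uIcc_neg hε hεR)) s₁ s₂ x
  convert hpos.add hneg using 1
  · funext p
    rw [truncHilbertSymbol]
    ring
  · simp only [truncBilinearHilbert, Complex.ofReal_add, ← intervalIntegral.integral_ofReal,
      Complex.ofReal_mul, Complex.ofReal_inv, div_eq_mul_inv]

lemma tsum_enorm_ite_add_eq {G E : Type*} [AddCommGroup G] [DecidableEq G] [TopologicalSpace E]
    [ENormedAddMonoid E] (a : G × G → E) (k : G) :
    ∑' p : G × G, ‖if p.1 + p.2 = k then a p else 0‖ₑ = ∑' j, ‖a (j, k - j)‖ₑ := by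
  refine (ENNReal.tsum_prod (f := fun j l : G => ‖if j + l = k then a (j, l) else 0‖ₑ)).trans
    (tsum_congr fun j => ?_)
  rw [tsum_eq_single (k - j) fun l hl => by rw [if_neg (by grind), enorm_zero],
    if_pos (add_sub_cancel j k)]

lemma enorm_fourierCoeffR_truncBilinearHilbert_le (hε : 0 < ε) (hεR : ε ≤ R) (s₁ s₂ : ℝ)
    (hfp : Function.Periodic f 1) (hgp : Function.Periodic g 1) (hf : Continuous f)
    (hg : Continuous g) (hf' : Summable fun k => ‖fourierCoeffR f k‖)
    (hg' : Summable fun k => ‖fourierCoeffR g k‖) (k : ℤ) :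
    ‖fourierCoeffR (truncBilinearHilbert ε R s₁ s₂ f g) k‖ₑ ≤
      12 * ∑' j, ‖fourierCoeffR f j‖ₑ * ‖fourierCoeffR g (k - j)‖ₑ := by
  set a : ℤ × ℤ → ℂ := fun p => fourierCoeffR f p.1 * fourierCoeffR g p.2 *
    truncHilbertSymbol ε R (p.1 * s₁ + p.2 * s₂)
  have ha : ∀ p, ‖a p‖ ≤ 12 * (‖fourierCoeffR f p.1‖ * ‖fourierCoeffR g p.2‖) := fun p => by
    rw [norm_mul, norm_mul, mul_comm]
    gcongr
    exact norm_truncHilbertSymbol_le hε hεR _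
  have hfg : Summable fun p : ℤ × ℤ => ‖fourierCoeffR f p.1‖ * ‖fourierCoeffR g p.2‖ :=
    hf'.mul_of_nonneg hg' (fun _ => norm_nonneg _) fun _ => norm_nonneg _
  have hcoeff := hasSum_fourierCoeffR_of_hasSum
    (.of_nonneg_of_le (fun _ => norm_nonneg _) ha (hfg.mul_left 12))
    (hasSum_truncBilinearHilbert hε hεR hf' hg' (hasSum_fourierCoeffR hfp hf hf')
      (hasSum_fourierCoeffR hgp hg hg') s₁ s₂) k
  rw [← hcoeff.tsum_eq]
  refine enorm_tsum_le_tsum_enorm.trans ?_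
  rw [tsum_enorm_ite_add_eq, ← ENNReal.tsum_mul_left]
  refine ENNReal.tsum_le_tsum fun j => ?_
  have h := ENNReal.ofReal_le_ofReal (ha (j, k - j))
  rwa [ENNReal.ofReal_mul (by norm_num), ENNReal.ofReal_mul (norm_nonneg _), ofReal_norm,
    ofReal_norm, ofReal_norm, ENNReal.ofReal_ofNat] at h

end BilinearHilbert

section Sobolev

/-- Membership of `h` in the Sobolev space `H^m(ℝ/ℤ)`; without it `sobNorm m h` has the junk
value `0`. -/
def MemSobolev (m : ℝ) (h : ℝ → ℝ) : Prop :=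
  Summable fun k : ℤ => (1 + (k : ℝ) ^ 2) ^ m * ‖fourierCoeffR h k‖ ^ 2

variable {m : ℝ} {f : ℝ → ℝ}

lemma summable_one_add_sq_rpow_neg (hm : 1 / 2 < m) :
    Summable fun k : ℤ => (1 + (k : ℝ) ^ 2) ^ (-m) := by
  refine .of_norm_bounded_eventually (summable_abs_int_rpow (b := 2 * m) (by linarith)) ?_
  filter_upwards [(Set.finite_singleton (0 : ℤ)).compl_mem_cofinite] with k hk
  have hk : 0 < |(k : ℝ)| := abs_pos.2 (Int.cast_ne_zero.2 hk)
  calc ‖(1 + (k : ℝ) ^ 2) ^ (-m)‖ = (1 + (k : ℝ) ^ 2) ^ (-m) := norm_of_nonneg (by positivity)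
    _ ≤ (|(k : ℝ)| ^ (2 : ℝ)) ^ (-m) :=
        rpow_le_rpow_of_nonpos (by positivity) (by norm_num) (by linarith)
    _ = |(k : ℝ)| ^ (-(2 * m)) := by rw [← rpow_mul hk.le, mul_neg]

lemma MemSobolev.summable_norm_fourierCoeffR (hm : 1 / 2 < m) (hf : MemSobolev m f) :
    Summable fun k => ‖fourierCoeffR f k‖ := by
  refine .of_nonneg_of_le (fun _ => norm_nonneg _) (fun k => ?_)
    ((summable_one_add_sq_rpow_neg hm).add hf)
  set a := (1 + (k : ℝ) ^ 2) ^ m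
  set c := ‖fourierCoeffR f k‖
  have ha : 0 < a := by positivity
  have hAMGM : a * c ≤ 1 + (a * c) ^ 2 := by nlinarith [sq_nonneg (a * c - 1), sq_nonneg (a * c)]
  calc c = a⁻¹ * (a * c) := by field_simp
    _ ≤ a⁻¹ * (1 + (a * c) ^ 2) := by gcongr
    _ = a⁻¹ + a * c ^ 2 := by field_simp
    _ = (1 + (k : ℝ) ^ 2) ^ (-m) + a * c ^ 2 := by rw [rpow_neg (by positivity)]

lemma memSobolev_of_contDiff {n : ℕ} (hmn : m ≤ n) (hp : Function.Periodic f 1)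
    (hf : ContDiff ℝ n f) : MemSobolev m f := by
  have hderiv : Summable fun k => ‖fourierCoeffR (iteratedDeriv n f) k‖ ^ 2 :=
    summable_norm_sq_fourierCoeffR (hf.continuous_iteratedDeriv n le_rfl)
  refine .of_nonneg_of_le (fun _ => by positivity) (fun k => ?_)
    (((summable_norm_sq_fourierCoeffR hf.continuous).add hderiv).mul_left (2 ^ (n - 1)))
  have hgrowth : |(k : ℝ)| ^ n * ‖fourierCoeffR f k‖ ≤ ‖fourierCoeffR (iteratedDeriv n f) k‖ := by
    rw [fourierCoeffR_iteratedDeriv n hp hf, norm_mul, norm_pow]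
    gcongr
    rw [norm_mul, norm_mul, norm_mul, Complex.norm_I, Complex.norm_intCast, Complex.norm_real,
      Complex.norm_ofNat, norm_of_nonneg pi_pos.le, mul_one]
    exact le_mul_of_one_le_left (abs_nonneg _) (by linarith [pi_gt_three])
  have hone : (1 : ℝ) ≤ 1 + (k : ℝ) ^ 2 := le_add_of_nonneg_right (sq_nonneg _)
  calc (1 + (k : ℝ) ^ 2) ^ m * ‖fourierCoeffR f k‖ ^ 2
      ≤ (1 + (k : ℝ) ^ 2) ^ n * ‖fourierCoeffR f k‖ ^ 2 := by
        rw [← rpow_natCast _ n]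
        gcongr
    _ ≤ 2 ^ (n - 1) * (1 ^ n + ((k : ℝ) ^ 2) ^ n) * ‖fourierCoeffR f k‖ ^ 2 := by
        gcongr
        exact add_pow_le zero_le_one (sq_nonneg _) n
    _ = 2 ^ (n - 1) * (‖fourierCoeffR f k‖ ^ 2 + (|(k : ℝ)| ^ n * ‖fourierCoeffR f k‖) ^ 2) := by
        rw [one_pow, mul_pow, pow_right_comm |(k : ℝ)|, sq_abs]
        ring
    _ ≤ _ := by gcongr

end Sobolev

section WeightedConvolution

lemma tsum_sq_le_tsum_mul_tsum_of_sq_le_mul {ι : Type*} {x u v : ι → ℝ≥0∞}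
    (h : ∀ i, x i ^ 2 ≤ u i * v i) : (∑' i, x i) ^ 2 ≤ (∑' i, u i) * ∑' i, v i := by
  let _ : MeasurableSpace ι := ⊤
  have hsqrt : ∀ y : ℝ≥0∞, (y ^ (1 / 2 : ℝ)) ^ (2 : ℝ) = y := fun y => by
    rw [← ENNReal.rpow_mul]; norm_num
  have hx : ∀ i, x i ≤ u i ^ (1 / 2 : ℝ) * v i ^ (1 / 2 : ℝ) := fun i => by
    rw [← ENNReal.mul_rpow_of_nonneg _ _ (by norm_num), one_div,
      ENNReal.le_rpow_inv_iff two_pos]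
    simpa using h i
  have hHolder := ENNReal.lintegral_mul_le_Lp_mul_Lq (Measure.count : Measure ι)
    HolderConjugate.two_two (f := fun i => u i ^ (1 / 2 : ℝ)) (g := fun i => v i ^ (1 / 2 : ℝ))
    measurable_from_top.aemeasurable measurable_from_top.aemeasurable
  simp only [Pi.mul_apply, hsqrt, lintegral_count' measurable_from_top] at hHolder
  calc (∑' i, x i) ^ 2
      ≤ ((∑' i, u i) ^ (1 / 2 : ℝ) * (∑' i, v i) ^ (1 / 2 : ℝ)) ^ 2 := by
        gcongr
        exact (ENNReal.tsum_le_tsum hx).trans hHolder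
    _ = (∑' i, u i) * ∑' i, v i := by
        rw [mul_pow, ← ENNReal.rpow_two, ← ENNReal.rpow_two, hsqrt, hsqrt]

variable {G : Type*} [AddCommGroup G] {w : G → ℝ≥0∞} {D : ℝ≥0∞}

lemma mul_tsum_inv_mul_le (hw : ∀ k, w k ≠ 0) (hw' : ∀ k, w k ≠ ∞)
    (hD : ∀ j l, w (j + l) ≤ D * (w j + w l)) (k : G) :
    w k * ∑' j, (w j * w (k - j))⁻¹ ≤ 2 * D * ∑' j, (w j)⁻¹ := by
  have hterm : ∀ j, w k * (w j * w (k - j))⁻¹ ≤ D * ((w j)⁻¹ + (w (k - j))⁻¹) := fun j => by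
    calc w k * (w j * w (k - j))⁻¹
        ≤ D * (w j + w (k - j)) * (w j * w (k - j))⁻¹ := by
          gcongr
          simpa only [add_sub_cancel] using hD j (k - j)
      _ = D * (w j * (w j)⁻¹ * (w (k - j))⁻¹ + w (k - j) * (w (k - j))⁻¹ * (w j)⁻¹) := by
          rw [ENNReal.mul_inv (.inl (hw _)) (.inl (hw' _))]
          ring
      _ = D * ((w j)⁻¹ + (w (k - j))⁻¹) := by
          rw [ENNReal.mul_inv_cancel (hw _) (hw' _), ENNReal.mul_inv_cancel (hw _) (hw' _),
            one_mul, one_mul, add_comm]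
  have hshift : ∑' j, (w (k - j))⁻¹ = ∑' j, (w j)⁻¹ :=
    (Equiv.subLeft k).tsum_eq fun j => (w j)⁻¹
  calc w k * ∑' j, (w j * w (k - j))⁻¹ = ∑' j, w k * (w j * w (k - j))⁻¹ :=
        ENNReal.tsum_mul_left.symm
    _ ≤ ∑' j, D * ((w j)⁻¹ + (w (k - j))⁻¹) := ENNReal.tsum_le_tsum hterm
    _ = 2 * D * ∑' j, (w j)⁻¹ := by
        rw [ENNReal.tsum_mul_left, ENNReal.tsum_add, hshift]
        ring

lemma tsum_mul_convolution_sq_le (hw : ∀ k, w k ≠ 0) (hw' : ∀ k, w k ≠ ∞)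
    (hD : ∀ j l, w (j + l) ≤ D * (w j + w l)) (a b : G → ℝ≥0∞) :
    ∑' k, w k * (∑' j, a j * b (k - j)) ^ 2 ≤
      2 * D * (∑' k, (w k)⁻¹) * (∑' k, w k * a k ^ 2) * ∑' k, w k * b k ^ 2 := by
  have hCS : ∀ k, (∑' j, a j * b (k - j)) ^ 2 ≤
      (∑' j, (w j * w (k - j))⁻¹) * ∑' j, w j * w (k - j) * (a j * b (k - j)) ^ 2 := fun k =>
    tsum_sq_le_tsum_mul_tsum_of_sq_le_mul fun j => by
      rw [← mul_assoc, ENNReal.inv_mul_cancel (mul_ne_zero (hw _) (hw _))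
        (ENNReal.mul_ne_top (hw' _) (hw' _)), one_mul]
  have hshift : ∀ j, ∑' k, w (k - j) * b (k - j) ^ 2 = ∑' k, w k * b k ^ 2 := fun j =>
    (Equiv.subRight j).tsum_eq fun k => w k * b k ^ 2
  calc ∑' k, w k * (∑' j, a j * b (k - j)) ^ 2
      ≤ ∑' k, 2 * D * (∑' j, (w j)⁻¹) *
          ∑' j, w j * w (k - j) * (a j * b (k - j)) ^ 2 :=
        ENNReal.tsum_le_tsum fun k => by
          grw [hCS k, ← mul_assoc, mul_tsum_inv_mul_le hw hw' hD k]
    _ = 2 * D * (∑' j, (w j)⁻¹) * ∑' j, ∑' k, w j * a j ^ 2 * (w (k - j) * b (k - j) ^ 2) := by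
        rw [ENNReal.tsum_mul_left, ENNReal.tsum_comm]
        congr! 5
        ring
    _ = 2 * D * (∑' j, (w j)⁻¹) * ∑' j, w j * a j ^ 2 * ∑' k, w k * b k ^ 2 := by
        congr! 3 with j
        rw [ENNReal.tsum_mul_left, hshift]
    _ = _ := by rw [ENNReal.tsum_mul_right, mul_assoc _ (∑' k, w k * a k ^ 2)]

end WeightedConvolution

section SobolevAlgebra

/-- The Sobolev weight `(1 + k²)^m`, valued in `ℝ≥0∞` so that weighted sums always exist. -/
noncomputable def sobolevWeight (m : ℝ) (k : ℤ) : ℝ≥0∞ :=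
  .ofReal ((1 + (k : ℝ) ^ 2) ^ m)

/-- The squared `H^m(ℝ/ℤ)` norm, equal to `∞` outside `H^m(ℝ/ℤ)`. -/
noncomputable def eSobNormSq (m : ℝ) (h : ℝ → ℝ) : ℝ≥0∞ :=
  ∑' k, sobolevWeight m k * ‖fourierCoeffR h k‖ₑ ^ 2

variable {m : ℝ} {f g h : ℝ → ℝ}

lemma sobolevWeight_ne_zero (m : ℝ) (k : ℤ) : sobolevWeight m k ≠ 0 :=
  (ENNReal.ofReal_pos.2 (by positivity)).ne'

lemma sobolevWeight_ne_top (m : ℝ) (k : ℤ) : sobolevWeight m k ≠ ∞ :=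
  ENNReal.ofReal_ne_top

lemma one_add_sq_rpow_add_le (hm : 0 ≤ m) (x y : ℝ) :
    (1 + (x + y) ^ 2) ^ m ≤ 4 ^ m * ((1 + x ^ 2) ^ m + (1 + y ^ 2) ^ m) := by
  wlog h : y ^ 2 ≤ x ^ 2 generalizing x y
  · rw [add_comm x, add_comm ((1 + x ^ 2) ^ m)]
    exact this y x (le_of_not_ge h)
  calc (1 + (x + y) ^ 2) ^ m ≤ (4 * (1 + x ^ 2)) ^ m := by
        gcongr
        nlinarith [sq_nonneg (x - y)]
    _ = 4 ^ m * (1 + x ^ 2) ^ m := mul_rpow (by norm_num) (by positivity)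
    _ ≤ _ := by
        gcongr
        exact le_add_of_nonneg_right (by positivity)

lemma sobolevWeight_add_le (hm : 0 ≤ m) (j l : ℤ) :
    sobolevWeight m (j + l) ≤ .ofReal (4 ^ m) * (sobolevWeight m j + sobolevWeight m l) := by
  rw [sobolevWeight, sobolevWeight, sobolevWeight,
    ← ENNReal.ofReal_add (by positivity) (by positivity), ← ENNReal.ofReal_mul (by positivity),
    Int.cast_add]
  exact ENNReal.ofReal_le_ofReal (one_add_sq_rpow_add_le hm _ _)

lemma tsum_inv_sobolevWeight_ne_top (hm : 1 / 2 < m) : ∑' k, (sobolevWeight m k)⁻¹ ≠ ∞ := by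
  convert (summable_one_add_sq_rpow_neg hm).tsum_ofReal_ne_top using 3 with k
  rw [sobolevWeight, rpow_neg (by positivity), ENNReal.ofReal_inv_of_pos (by positivity)]

lemma sobolevWeight_mul_enorm_sq (m : ℝ) (h : ℝ → ℝ) (k : ℤ) :
    sobolevWeight m k * ‖fourierCoeffR h k‖ₑ ^ 2 =
      .ofReal ((1 + (k : ℝ) ^ 2) ^ m * ‖fourierCoeffR h k‖ ^ 2) := by
  rw [sobolevWeight, ENNReal.ofReal_mul (by positivity), ENNReal.ofReal_pow (norm_nonneg _),
    ofReal_norm]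

lemma memSobolev_iff_eSobNormSq_ne_top : MemSobolev m h ↔ eSobNormSq m h ≠ ∞ := by
  simp only [eSobNormSq, sobolevWeight_mul_enorm_sq]
  refine ⟨Summable.tsum_ofReal_ne_top, fun h => ?_⟩
  refine (ENNReal.summable_toReal h).congr fun k => ?_
  exact ENNReal.toReal_ofReal (by positivity)

lemma sobNorm_eq_sqrt_toReal_eSobNormSq (m : ℝ) (h : ℝ → ℝ) :
    sobNorm m h = √(eSobNormSq m h).toReal := by
  simp only [eSobNormSq, sobolevWeight_mul_enorm_sq]
  rw [ENNReal.tsum_toReal_eq fun k => ENNReal.ofReal_ne_top, sobNorm]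
  congr! 3 with k
  exact (ENNReal.toReal_ofReal (by positivity)).symm

lemma eSobNormSq_le_of_enorm_le_convolution (hm : 0 ≤ m) {A : ℝ≥0∞}
    (hA : ∀ k, ‖fourierCoeffR h k‖ₑ ≤
      A * ∑' j, ‖fourierCoeffR f j‖ₑ * ‖fourierCoeffR g (k - j)‖ₑ) :
    eSobNormSq m h ≤ A ^ 2 * (2 * .ofReal (4 ^ m) * ∑' k, (sobolevWeight m k)⁻¹) *
      eSobNormSq m f * eSobNormSq m g := by
  calc eSobNormSq m h
      ≤ ∑' k, sobolevWeight m k *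
          (A * ∑' j, ‖fourierCoeffR f j‖ₑ * ‖fourierCoeffR g (k - j)‖ₑ) ^ 2 :=
        ENNReal.tsum_le_tsum fun k => by grw [hA k]
    _ = A ^ 2 * ∑' k, sobolevWeight m k *
          (∑' j, ‖fourierCoeffR f j‖ₑ * ‖fourierCoeffR g (k - j)‖ₑ) ^ 2 := by
        simp only [mul_pow, mul_left_comm _ (A ^ 2), ENNReal.tsum_mul_left]
    _ ≤ _ := by
        rw [mul_assoc (A ^ 2), mul_assoc (A ^ 2)]
        gcongr
        exact tsum_mul_convolution_sq_le (sobolevWeight_ne_zero m) (sobolevWeight_ne_top m)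
          (sobolevWeight_add_le hm) _ _

lemma MemSobolev.of_eSobNormSq_le {K : ℝ≥0∞} (hK : K ≠ ∞) (hf : MemSobolev m f)
    (hg : MemSobolev m g) (h_le : eSobNormSq m h ≤ K * eSobNormSq m f * eSobNormSq m g) :
    MemSobolev m h ∧ sobNorm m h ≤ √K.toReal * sobNorm m f * sobNorm m g := by
  rw [memSobolev_iff_eSobNormSq_ne_top] at *
  have h_top : K * eSobNormSq m f * eSobNormSq m g ≠ ∞ := by finiteness
  refine ⟨ne_top_of_le_ne_top h_top h_le, ?_⟩
  simp only [sobNorm_eq_sqrt_toReal_eSobNormSq]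
  rw [← sqrt_mul ENNReal.toReal_nonneg, ← sqrt_mul (by positivity), ← ENNReal.toReal_mul,
    ← ENNReal.toReal_mul]
  exact sqrt_le_sqrt (ENNReal.toReal_mono h_top h_le)

end SobolevAlgebra

theorem stmt8_general (m : ℝ) (hm : 1 / 2 < m) :
    ∃ C : ℝ, 0 < C ∧ ∀ ε R : ℝ, 0 < ε → ε ≤ R → ∀ s₁ s₂ : ℝ, ∀ f g : ℝ → ℝ,
      Function.Periodic f 1 → Function.Periodic g 1 → Continuous f → Continuous g →
      MemSobolev m f → MemSobolev m g →
      MemSobolev m (truncBilinearHilbert ε R s₁ s₂ f g) ∧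
        sobNorm m (truncBilinearHilbert ε R s₁ s₂ f g) ≤ C * sobNorm m f * sobNorm m g := by
  set K : ℝ≥0∞ := 12 ^ 2 * (2 * .ofReal (4 ^ m) * ∑' k, (sobolevWeight m k)⁻¹)
  have hK : K + 1 ≠ ∞ := by
    have := tsum_inv_sobolevWeight_ne_top hm
    finiteness
  refine ⟨√(K + 1).toReal, sqrt_pos.2 (ENNReal.toReal_pos (by simp) hK), ?_⟩
  intro ε R hε hεR s₁ s₂ f g hfp hgp hf hg hfm hgm
  refine MemSobolev.of_eSobNormSq_le hK hfm hgm ?_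
  calc eSobNormSq m (truncBilinearHilbert ε R s₁ s₂ f g)
      ≤ K * eSobNormSq m f * eSobNormSq m g :=
        eSobNormSq_le_of_enorm_le_convolution (by linarith) <|
          enorm_fourierCoeffR_truncBilinearHilbert_le hε hεR s₁ s₂ hfp hgp hf hg
            (hfm.summable_norm_fourierCoeffR hm) (hgm.summable_norm_fourierCoeffR hm)
    _ ≤ (K + 1) * eSobNormSq m f * eSobNormSq m g := by
        gcongr
        exact le_self_add

/-- Uniform `Hᵐ`-bound for the truncated bilinear Hilbert transform, `m > 1/2`:
`‖H^ε_{s₁,s₂}(f,g)‖_{Hᵐ} ≤ C_H ‖f‖_{Hᵐ} ‖g‖_{Hᵐ}` with `C_H` independent of `ε, s₁, s₂`. -/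
theorem stmt8 (m : ℝ) (hm : 1/2 < m) :
    ∃ C : ℝ, 0 < C ∧
      ∀ ε : ℝ, 0 < ε → ε ≤ 1/2 →
        ∀ s₁ s₂ : ℝ, s₁ ∈ Set.Icc (0:ℝ) 1 → s₂ ∈ Set.Icc (0:ℝ) 1 →
          ∀ f g : ℝ → ℝ, Function.Periodic f 1 → Function.Periodic g 1 →
            ContDiff ℝ (⊤ : ℕ∞) f → ContDiff ℝ (⊤ : ℕ∞) g →
            sobNorm m (fun x =>
                (∫ w in ε..(1/2:ℝ), f (x + s₁*w) * g (x + s₂*w) / w) +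
                  ∫ w in (-(1/2):ℝ)..(-ε), f (x + s₁*w) * g (x + s₂*w) / w) ≤
              C * sobNorm m f * sobNorm m g := by
  obtain ⟨C, hC, hbound⟩ := stmt8_general m hm
  obtain ⟨n, hn⟩ := exists_nat_ge m
  exact ⟨C, hC, fun ε hε hε' s₁ s₂ _ _ f g hfp hgp hf hg =>
    (hbound ε (1 / 2) hε hε' s₁ s₂ f g hfp hgp hf.continuous hg.continuous
      (memSobolev_of_contDiff hn hfp (hf.of_le (by exact_mod_cast le_top)))
      (memSobolev_of_contDiff hn hgp (hg.of_le (by exact_mod_cast le_top)))).2⟩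
end

section
/- Suppose γ ∈ C^∞(ℝ/ℤ, ℝ^n) is parametrized by arc-length and there exist constants M < ∞ and r > 0 such that the quantities a_l := ‖∂^{l+1}γ‖_{H¹} (l ∈ ℕ₀) satisfy a recursive bound a_{l+1} ≤ ã_{l+1} where (ã_l) are the Taylor coefficients at 0 of an analytic solution c of an analytic ODE c' = G(c), c(0) = a₀·(1,…,1), with |c^{(l)}(0)| ≤ M l!/r^l for all l. Then ‖∂^{l+1}γ‖_{H¹} ≤ M l!/r^l for all l ∈ ℕ₀ and consequently γ is real analytic on ℝ/ℤ. -/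
open scoped Nat

/-- The `H¹(ℝ/ℤ, ℝⁿ)` norm, modelled as `(∫₀¹ ‖f‖² + ∫₀¹ ‖f'‖²)^{1/2}`. -/
noncomputable def H1norm {n : ℕ} (f : ℝ → EuclideanSpace ℝ (Fin n)) : ℝ :=
  Real.sqrt ((∫ x in (0:ℝ)..1, ‖f x‖^2) + ∫ x in (0:ℝ)..1, ‖deriv f x‖^2)

/-!
By the embedding `H¹ ↪ L^∞` on a period, `H¹` bounds of size `l! / r ^ l` on the derivatives of a
smooth periodic curve are pointwise bounds of the same size, up to a constant. The remainder of
order `n` in Taylor's formula, at distance `d` from the centre, is then `O((d / r) ^ (n + 1))`, so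
every Taylor series has radius of convergence at least `r` and sums to the curve.
-/

section Sobolev

variable {E : Type*} [NormedAddCommGroup E] [NormedSpace ℝ E] {f : ℝ → E} {a b x y : ℝ}

/-- The Sobolev norm `(∫ₐᵇ ‖f‖² + ∫ₐᵇ ‖f'‖²)^{1/2}` of `H¹(a, b)`, for curves in a normed space.
The derivative is the classical one, so the value is meaningful only for, say, `C¹` curves. -/
noncomputable def h1Norm (a b : ℝ) (f : ℝ → E) : ℝ :=
  √((∫ t in a..b, ‖f t‖ ^ 2) + ∫ t in a..b, ‖deriv f t‖ ^ 2)

lemma h1Norm_nonneg (a b : ℝ) (f : ℝ → E) : 0 ≤ h1Norm a b f :=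
  Real.sqrt_nonneg _

lemma norm_sub_le_integral_norm_deriv (hf : ContDiff ℝ 1 f)
    (hx : x ∈ Set.Icc a b) (hy : y ∈ Set.Icc a b) :
    ‖f x - f y‖ ≤ ∫ t in a..b, ‖deriv f t‖ := by
  wlog hyx : y ≤ x generalizing x y
  · rw [norm_sub_rev]
    exact this hy hx (le_of_not_ge hyx)
  have hint (c d : ℝ) : IntervalIntegrable (fun t ↦ ‖deriv f t‖) MeasureTheory.volume c d :=
    (hf.continuous_deriv le_rfl).norm.intervalIntegrable c d
  calc ‖f x - f y‖
      ≤ ∫ t in y..x, ‖deriv f t‖ :=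
        norm_sub_le_integral_of_norm_deriv_le_of_le hyx hf.continuous.continuousOn
          (hf.differentiable one_ne_zero).differentiableOn (.of_forall fun _ _ ↦ le_rfl) (hint y x)
    _ ≤ ∫ t in a..b, ‖deriv f t‖ :=
        intervalIntegral.integral_mono_interval hy.1 hyx hx.2
          (.of_forall fun t ↦ norm_nonneg (deriv f t)) (hint a b)

lemma mul_norm_le_integral_norm_add_mul_integral_norm_deriv (hf : ContDiff ℝ 1 f)
    (hx : x ∈ Set.Icc a b) :
    (b - a) * ‖f x‖ ≤ (∫ t in a..b, ‖f t‖) + (b - a) * ∫ t in a..b, ‖deriv f t‖ := by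
  have hint : IntervalIntegrable (fun t ↦ ‖f t‖) MeasureTheory.volume a b :=
    hf.continuous.norm.intervalIntegrable a b
  calc (b - a) * ‖f x‖
      = ∫ _ in a..b, ‖f x‖ := by rw [intervalIntegral.integral_const, smul_eq_mul]
    _ ≤ ∫ y in a..b, (‖f y‖ + ∫ t in a..b, ‖deriv f t‖) := by
        refine intervalIntegral.integral_mono_on (hx.1.trans hx.2) (by simp)
          (hint.add (by simp)) fun y hy ↦ ?_
        linarith [norm_sub_norm_le (f x) (f y), norm_sub_le_integral_norm_deriv hf hx hy]
    _ = (∫ t in a..b, ‖f t‖) + (b - a) * ∫ t in a..b, ‖deriv f t‖ := by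
        rw [intervalIntegral.integral_add hint (by simp), intervalIntegral.integral_const,
          smul_eq_mul]

lemma sq_intervalIntegral_le {g : ℝ → ℝ} (hab : a < b)
    (hg : IntervalIntegrable g MeasureTheory.volume a b)
    (hg2 : IntervalIntegrable (fun t ↦ g t ^ 2) MeasureTheory.volume a b) :
    (∫ t in a..b, g t) ^ 2 ≤ (b - a) * ∫ t in a..b, g t ^ 2 := by
  have hba : 0 < b - a := sub_pos.2 hab
  have hjensen : (⨍ t in a..b, g t) ^ 2 ≤ ⨍ t in a..b, g t ^ 2 := by
    rw [Set.uIoc_of_le hab.le]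
    exact even_two.convexOn_pow.map_set_average_le (continuous_pow 2).continuousOn isClosed_univ
      (by simpa using hab) (by simp) (by simp) hg.1 hg2.1
  rw [interval_average_eq, interval_average_eq, smul_eq_mul, smul_eq_mul, mul_pow] at hjensen
  calc (∫ t in a..b, g t) ^ 2
      = (b - a) ^ 2 * ((b - a)⁻¹ ^ 2 * (∫ t in a..b, g t) ^ 2) := by field_simp
    _ ≤ (b - a) ^ 2 * ((b - a)⁻¹ * ∫ t in a..b, g t ^ 2) := by gcongr
    _ = (b - a) * ∫ t in a..b, g t ^ 2 := by field_simp

theorem norm_le_sqrt_mul_h1Norm (hab : a < b) (hf : ContDiff ℝ 1 f) (hx : x ∈ Set.Icc a b) :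
    ‖f x‖ ≤ √((b - a)⁻¹ + (b - a)) * h1Norm a b f := by
  have hba : 0 < b - a := sub_pos.2 hab
  have hf' : Continuous (deriv f) := hf.continuous_deriv le_rfl
  have hf_sq := sq_intervalIntegral_le hab (hf.continuous.norm.intervalIntegrable a b)
    ((hf.continuous.norm.pow 2).intervalIntegrable a b)
  have hf'_sq := sq_intervalIntegral_le hab (hf'.norm.intervalIntegrable a b)
    ((hf'.norm.pow 2).intervalIntegrable a b)
  have hmean := mul_norm_le_integral_norm_add_mul_integral_norm_deriv hf hx
  rw [h1Norm, ← Real.sqrt_mul (by positivity)]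
  apply Real.le_sqrt_of_sq_le
  set L := b - a
  set I := ∫ t in a..b, ‖f t‖
  set J := ∫ t in a..b, ‖deriv f t‖
  have hcauchy : (I + L * J) ^ 2 ≤ (1 + L ^ 2) * (I ^ 2 + J ^ 2) := by
    linarith [sq_nonneg (L * I - J)]
  calc ‖f x‖ ^ 2
      = L⁻¹ ^ 2 * (L * ‖f x‖) ^ 2 := by field_simp
    _ ≤ L⁻¹ ^ 2 * ((1 + L ^ 2) * (I ^ 2 + J ^ 2)) := by
        gcongr
        exact (pow_le_pow_left₀ (by positivity) hmean 2).trans hcauchy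
    _ ≤ L⁻¹ ^ 2 * ((1 + L ^ 2) *
          (L * (∫ t in a..b, ‖f t‖ ^ 2) + L * ∫ t in a..b, ‖deriv f t‖ ^ 2)) := by gcongr
    _ = (L⁻¹ + L) * ((∫ t in a..b, ‖f t‖ ^ 2) + ∫ t in a..b, ‖deriv f t‖ ^ 2) := by
        field_simp

theorem norm_le_sqrt_mul_h1Norm_of_periodic {T : ℝ} (hT : 0 < T) (hper : Function.Periodic f T)
    (hf : ContDiff ℝ 1 f) (x : ℝ) :
    ‖f x‖ ≤ √(T⁻¹ + T) * h1Norm 0 T f := by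
  obtain ⟨z, hz, hxz⟩ := hper.exists_mem_Ico₀ hT x
  rw [hxz]
  simpa only [sub_zero] using norm_le_sqrt_mul_h1Norm hT hf (Set.Ico_subset_Icc_self hz)

end Sobolev

section Taylor

variable {E F : Type*} [NormedAddCommGroup E] [NormedSpace ℝ E]
  [NormedAddCommGroup F] [NormedSpace ℝ F] {f : E → F} {x y : E} {C r : ℝ}

/-- The Taylor series of `f` at `x`, the candidate power series expansion of `f` there. Unlike in
`ftaylorSeries`, the terms carry the factor `1 / n!`. -/
noncomputable def taylorSeries (f : E → F) (x : E) : FormalMultilinearSeries ℝ E F :=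
  fun n ↦ (n ! : ℝ)⁻¹ • iteratedFDeriv ℝ n f x

lemma le_radius_taylorSeries
    (hbound : ∀ n : ℕ, ‖iteratedFDeriv ℝ n f x‖ ≤ C * n ! / r ^ n) :
    ENNReal.ofReal r ≤ (taylorSeries f x).radius := by
  obtain hr | hr := le_or_gt r 0
  · simp [ENNReal.ofReal_of_nonpos hr]
  refine (taylorSeries f x).le_radius_of_bound C fun n ↦ ?_
  rw [Real.coe_toNNReal r hr.le, taylorSeries, norm_smul, norm_inv, Real.norm_natCast]
  calc (n ! : ℝ)⁻¹ * ‖iteratedFDeriv ℝ n f x‖ * r ^ n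
      ≤ (n ! : ℝ)⁻¹ * (C * n ! / r ^ n) * r ^ n := by gcongr; exact hbound n
    _ = C := by field_simp

variable [CompleteSpace F]

lemma norm_sub_partialSum_taylorSeries_le {n : ℕ} {K : ℝ}
    (hf : ∀ t ∈ Set.Icc (0 : ℝ) 1, ContDiffAt ℝ (n + 1) f (x + t • y))
    (hK : ∀ t ∈ Set.Icc (0 : ℝ) 1, ‖iteratedFDeriv ℝ (n + 1) f (x + t • y)‖ ≤ K) :
    ‖f (x + y) - (taylorSeries f x).partialSum (n + 1) y‖ ≤ K / (n + 1)! * ‖y‖ ^ (n + 1) := by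
  have hremainder : f (x + y) - (taylorSeries f x).partialSum (n + 1) y =
      (n ! : ℝ)⁻¹ •
        ∫ t in 0..1, (1 - t) ^ n • iteratedFDeriv ℝ (n + 1) f (x + t • y) (fun _ ↦ y) :=
    sub_eq_of_eq_add' (map_add_eq_sum_add_integral_iteratedFDeriv hf)
  have hintegrand (t : ℝ) (ht : t ∈ Set.Ioc (0 : ℝ) 1) :
      ‖(1 - t) ^ n • iteratedFDeriv ℝ (n + 1) f (x + t • y) (fun _ ↦ y)‖ ≤
        (1 - t) ^ n * (K * ‖y‖ ^ (n + 1)) := by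
    have h1t : 0 ≤ 1 - t := sub_nonneg.2 ht.2
    rw [norm_smul, norm_pow, Real.norm_of_nonneg h1t]
    gcongr
    calc ‖iteratedFDeriv ℝ (n + 1) f (x + t • y) (fun _ ↦ y)‖
        ≤ ‖iteratedFDeriv ℝ (n + 1) f (x + t • y)‖ * ‖y‖ ^ (n + 1) := by
          simpa using ContinuousMultilinearMap.le_opNorm _ (fun _ : Fin (n + 1) ↦ y)
      _ ≤ K * ‖y‖ ^ (n + 1) := by gcongr; exact hK t (Set.Ioc_subset_Icc_self ht)
  calc ‖f (x + y) - (taylorSeries f x).partialSum (n + 1) y‖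
      ≤ (n ! : ℝ)⁻¹ * ∫ t in (0 : ℝ)..1, (1 - t) ^ n * (K * ‖y‖ ^ (n + 1)) := by
        rw [hremainder, norm_smul, norm_inv, Real.norm_natCast]
        gcongr
        exact intervalIntegral.norm_integral_le_of_norm_le zero_le_one (.of_forall hintegrand)
          (Continuous.intervalIntegrable (by fun_prop) 0 1)
    _ = (n ! : ℝ)⁻¹ * ((n + 1 : ℝ)⁻¹ * (K * ‖y‖ ^ (n + 1))) := by
        rw [intervalIntegral.integral_mul_const,
          intervalIntegral.integral_comp_sub_left (fun t ↦ t ^ n) 1, integral_pow]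
        simp
    _ = K / (n + 1)! * ‖y‖ ^ (n + 1) := by
        rw [Nat.factorial_succ]
        push_cast
        field_simp

lemma tendsto_partialSum_taylorSeries (hf : ContDiffOn ℝ (⊤ : ℕ∞) f (Metric.ball x r))
    (hbound : ∀ n : ℕ, ∀ z ∈ Metric.ball x r, ‖iteratedFDeriv ℝ n f z‖ ≤ C * n ! / r ^ n)
    (hy : ‖y‖ < r) :
    Filter.Tendsto (fun n ↦ (taylorSeries f x).partialSum n y) Filter.atTop (nhds (f (x + y))) := by
  have hr : 0 < r := (norm_nonneg y).trans_lt hy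
  have hsegment (t : ℝ) (ht : t ∈ Set.Icc (0 : ℝ) 1) : x + t • y ∈ Metric.ball x r := by
    rw [mem_ball_iff_norm, add_sub_cancel_left, norm_smul, Real.norm_of_nonneg ht.1]
    exact (mul_le_of_le_one_left (norm_nonneg y) ht.2).trans_lt hy
  have hremainder (n : ℕ) :
      ‖(taylorSeries f x).partialSum (n + 1) y - f (x + y)‖ ≤ C * (‖y‖ / r) ^ (n + 1) :=
    calc ‖(taylorSeries f x).partialSum (n + 1) y - f (x + y)‖
        ≤ C * (n + 1)! / r ^ (n + 1) / (n + 1)! * ‖y‖ ^ (n + 1) := by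
          rw [norm_sub_rev]
          exact norm_sub_partialSum_taylorSeries_le
            (fun t ht ↦ (hf.contDiffAt (Metric.isOpen_ball.mem_nhds (hsegment t ht))).of_le
              (by exact_mod_cast le_top))
            (fun t ht ↦ hbound (n + 1) _ (hsegment t ht))
      _ = C * (‖y‖ / r) ^ (n + 1) := by rw [div_pow]; field_simp
  have hgeometric : Filter.Tendsto (fun n : ℕ ↦ C * (‖y‖ / r) ^ n) Filter.atTop (nhds 0) := by
    simpa using (tendsto_pow_atTop_nhds_zero_of_lt_one (by positivity)
      ((div_lt_one hr).2 hy)).const_mul C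
  refine (Filter.tendsto_add_atTop_iff_nat 1).1 (tendsto_iff_norm_sub_tendsto_zero.2 ?_)
  exact squeeze_zero (fun _ ↦ norm_nonneg _) hremainder
    (hgeometric.comp (Filter.tendsto_add_atTop_nat 1))

theorem hasFPowerSeriesOnBall_taylorSeries (hr : 0 < r)
    (hf : ContDiffOn ℝ (⊤ : ℕ∞) f (Metric.ball x r))
    (hbound : ∀ n : ℕ, ∀ z ∈ Metric.ball x r, ‖iteratedFDeriv ℝ n f z‖ ≤ C * n ! / r ^ n) :
    HasFPowerSeriesOnBall f (taylorSeries f x) x (ENNReal.ofReal r) where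
  r_le := le_radius_taylorSeries fun n ↦ hbound n x (Metric.mem_ball_self hr)
  r_pos := ENNReal.ofReal_pos.2 hr
  hasSum {y} hy := by
    have hsummable : Summable fun n ↦ taylorSeries f x n fun _ ↦ y :=
      (taylorSeries f x).summable <| Metric.eball_subset_eball
        (le_radius_taylorSeries fun n ↦ hbound n x (Metric.mem_ball_self hr)) hy
    rw [Metric.eball_ofReal, mem_ball_zero_iff] at hy
    exact hsummable.hasSum_iff_tendsto_nat.2 (tendsto_partialSum_taylorSeries hf hbound hy)

end Taylor

lemma periodic_iteratedDeriv {𝕜 F : Type*} [NontriviallyNormedField 𝕜] [NormedAddCommGroup F]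
    [NormedSpace 𝕜 F] {f : 𝕜 → F} {c : 𝕜} (hf : Function.Periodic f c) (k : ℕ) :
    Function.Periodic (iteratedDeriv k f) c := fun x ↦
  calc iteratedDeriv k f (x + c)
      = iteratedDeriv k (fun z ↦ f (z + c)) x := by rw [iteratedDeriv_comp_add_const]
    _ = iteratedDeriv k f x := by rw [hf.funext]

lemma exists_forall_le_mul_factorial_div_pow_of_succ {a : ℕ → ℝ} {M r : ℝ} (hM : 0 ≤ M)
    (hr : 0 < r) (ha : ∀ l : ℕ, a (l + 1) ≤ M * l ! / r ^ l) :
    ∃ C, ∀ k : ℕ, a k ≤ C * k ! / r ^ k := by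
  refine ⟨max (a 0) (M * r), fun k ↦ ?_⟩
  cases k with
  | zero => simp
  | succ l =>
    calc a (l + 1)
        ≤ M * l ! / r ^ l := ha l
      _ = M * r * l ! / r ^ (l + 1) := by rw [pow_succ]; field_simp
      _ ≤ M * r * (l + 1)! / r ^ (l + 1) := by gcongr; exact l.le_succ
      _ ≤ max (a 0) (M * r) * (l + 1)! / r ^ (l + 1) := by gcongr; exact le_max_right _ _

theorem stmt19_general {E : Type*} [NormedAddCommGroup E] [NormedSpace ℝ E] [CompleteSpace E]
    {γ : ℝ → E} {T M r : ℝ} (hγ : ContDiff ℝ (⊤ : ℕ∞) γ) (hT : 0 < T)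
    (hper : Function.Periodic γ T) (hr : 0 < r)
    (hbound : ∀ l : ℕ, h1Norm 0 T (iteratedDeriv (l + 1) γ) ≤ M * l ! / r ^ l) :
    AnalyticOnNhd ℝ γ Set.univ := by
  have hM : 0 ≤ M := by simpa using (h1Norm_nonneg 0 T (iteratedDeriv 1 γ)).trans (hbound 0)
  obtain ⟨C, hC⟩ := exists_forall_le_mul_factorial_div_pow_of_succ
    (a := fun k ↦ h1Norm 0 T (iteratedDeriv k γ)) hM hr hbound
  have hsup (k : ℕ) (x : ℝ) :
      ‖iteratedFDeriv ℝ k γ x‖ ≤ √(T⁻¹ + T) * C * k ! / r ^ k := by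
    have hderiv : ContDiff ℝ 1 (iteratedDeriv k γ) := by
      rw [iteratedDeriv_eq_iterate]
      exact ContDiff.iterate_deriv' 1 k (hγ.of_le (by exact_mod_cast le_top))
    calc ‖iteratedFDeriv ℝ k γ x‖
        = ‖iteratedDeriv k γ x‖ := norm_iteratedFDeriv_eq_norm_iteratedDeriv
      _ ≤ √(T⁻¹ + T) * h1Norm 0 T (iteratedDeriv k γ) :=
          norm_le_sqrt_mul_h1Norm_of_periodic hT (periodic_iteratedDeriv hper k) hderiv x
      _ ≤ √(T⁻¹ + T) * (C * k ! / r ^ k) := by gcongr; exact hC k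
      _ = √(T⁻¹ + T) * C * k ! / r ^ k := by ring
  exact fun x _ ↦
    (hasFPowerSeriesOnBall_taylorSeries hr hγ.contDiffOn fun k z _ ↦ hsup k z).analyticAt

/-- Majorant argument: if the quantities `a_l = ‖∂^{l+1}γ‖_{H¹}` of a smooth, arc-length
parametrized periodic curve `γ` are dominated by the Taylor coefficients `ã_l` of an
analytic solution of an analytic ODE, which satisfy `ã_l ≤ M l!/r^l`, then
`‖∂^{l+1}γ‖_{H¹} ≤ M l!/r^l` for all `l`, and `γ` is real analytic. -/
theorem stmt19 {n : ℕ} (γ : ℝ → EuclideanSpace ℝ (Fin n))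
    (hγ : ContDiff ℝ (⊤ : ℕ∞) γ) (hper : Function.Periodic γ 1)
    (harc : ∀ x : ℝ, ‖deriv γ x‖ = 1)
    (M r : ℝ) (hM : 0 < M) (hr : 0 < r)
    (atil : ℕ → ℝ)
    (hmaj : ∀ l : ℕ, H1norm (iteratedDeriv (l + 1) γ) ≤ atil l)
    (hatil : ∀ l : ℕ, atil l ≤ M * (l ! : ℝ) / r ^ l) :
    (∀ l : ℕ, H1norm (iteratedDeriv (l + 1) γ) ≤ M * (l ! : ℝ) / r ^ l) ∧
    AnalyticOnNhd ℝ γ Set.univ := by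
  have hH1 (l : ℕ) : H1norm (iteratedDeriv (l + 1) γ) ≤ M * l ! / r ^ l := (hmaj l).trans (hatil l)
  exact ⟨hH1, stmt19_general hγ one_pos hper hr hH1⟩
end
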